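/- arXiv:1405.7542 — 3 statements merged into one kernel-verified Lean document; each statement's English description precedes it below -/
import Mathlib

section
/- Let m be a positive integer and define φ_m(ρ) := (1/(2π)) ∫_ℝ e^{-iρr} e^{-r^{2m}} dr. Then there exists a constant C > 0 such that |φ_m(ρ)| ≤ C · exp(−|ρ|^{1 + 1/(2m)}) for all ρ ∈ ℝ. -/
open MeasureTheory

/-- The Fourier transform `φ_m(ρ) := (1/(2π)) ∫_ℝ e^{-iρr} e^{-r^{2m}} dr`. -/
noncomputable def phiFT (m : ℕ) (ρ : ℝ) : ℂ :=
  (1 / (2 * Real.pi)) *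
    ∫ r : ℝ, Complex.exp (-(Complex.I * (ρ : ℂ) * (r : ℂ))) * (Real.exp (-(r ^ (2 * m))) : ℂ)

/-!
The integrand extends to the entire function `exp (-iρz - z ^ n)` with `n = 2m`. Since
`Re ((x + iy) ^ n) ≥ x ^ n / 2 - C y ^ n`, it decays along every horizontal line, so the line of
integration can be moved to height `y`, which bounds the integral by `K exp (ρ y + C y ^ n)` for
every real `y`. Minimizing the exponent over `y` is a Legendre transform and yields
`K exp (-c |ρ| ^ p)` with the conjugate exponent `p = n / (n - 1)`, and `p > 1 + 1 / n`.
-/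

open Filter Topology

section ContourShift

variable {E : Type*} [NormedAddCommGroup E] {f : ℂ → E} {g : ℝ → ℝ} {a b : ℝ}

lemma integrable_horizontal_of_norm_le (hf : ContinuousOn f (Complex.im ⁻¹' Set.uIcc a b))
    (hg : Integrable g) (hfg : ∀ x : ℝ, ∀ y ∈ Set.uIcc a b, ‖f (x + y * Complex.I)‖ ≤ g x)
    {y : ℝ} (hy : y ∈ Set.uIcc a b) : Integrable fun x : ℝ ↦ f (x + y * Complex.I) := by
  have hcont : Continuous fun x : ℝ ↦ f (x + y * Complex.I) :=
    hf.comp_continuous (by fun_prop) fun x ↦ by simpa using hy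
  exact hg.mono' hcont.aestronglyMeasurable (Eventually.of_forall fun x ↦ hfg x y hy)

lemma tendsto_integral_vertical_cocompact [NormedSpace ℝ E]
    (hg : Tendsto g (cocompact ℝ) (𝓝 0))
    (hfg : ∀ x : ℝ, ∀ y ∈ Set.uIcc a b, ‖f (x + y * Complex.I)‖ ≤ g x) :
    Tendsto (fun x : ℝ ↦ ∫ y : ℝ in a..b, f (x + y * Complex.I)) (cocompact ℝ) (𝓝 0) := by
  have hbound : Tendsto (fun x ↦ g x * |b - a|) (cocompact ℝ) (𝓝 0) := by
    simpa using hg.mul_const |b - a|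
  exact squeeze_zero_norm (fun x ↦ intervalIntegral.norm_integral_le_of_norm_le_const
    fun y hy ↦ hfg x y (Set.uIoc_subset_uIcc hy)) hbound

theorem integral_horizontal_eq_of_differentiableOn [NormedSpace ℂ E]
    (hf : DifferentiableOn ℂ f (Complex.im ⁻¹' Set.uIcc a b)) (hg : Integrable g)
    (hg₀ : Tendsto g (cocompact ℝ) (𝓝 0))
    (hfg : ∀ x : ℝ, ∀ y ∈ Set.uIcc a b, ‖f (x + y * Complex.I)‖ ≤ g x) :
    ∫ x : ℝ, f (x + a * Complex.I) = ∫ x : ℝ, f (x + b * Complex.I) := by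
  have hhorizontal {y : ℝ} (hy : y ∈ Set.uIcc a b) :
      Tendsto (fun T : ℝ ↦ ∫ x in -T..T, f (x + y * Complex.I)) atTop
        (𝓝 (∫ x : ℝ, f (x + y * Complex.I))) :=
    intervalIntegral_tendsto_integral
      (integrable_horizontal_of_norm_le hf.continuousOn hg hfg hy)
      tendsto_neg_atTop_atBot tendsto_id
  have hvertical := tendsto_integral_vertical_cocompact hg₀ hfg
  have hright := hvertical.comp (tendsto_id.mono_right atTop_le_cocompact)
  have hleft := hvertical.comp (tendsto_neg_atTop_atBot.mono_right atBot_le_cocompact)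
  have hrect (T : ℝ) :
      (∫ x in -T..T, f (x + a * Complex.I)) - (∫ x in -T..T, f (x + b * Complex.I)) =
        Complex.I • (∫ y in a..b, f ((-T : ℝ) + y * Complex.I)) -
          Complex.I • ∫ y in a..b, f (T + y * Complex.I) := by
    have h := Complex.integral_boundary_rect_eq_zero_of_differentiableOn f
      (-T + a * Complex.I) (T + b * Complex.I) (hf.mono fun z hz ↦ by simpa using hz.2)
    rw [eq_sub_iff_add_eq, ← sub_eq_zero, ← h]
    simp
  have hdiff := ((hleft.const_smul Complex.I).sub (hright.const_smul Complex.I)).congr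
    fun T ↦ (hrect T).symm
  rw [smul_zero, sub_zero] at hdiff
  exact sub_eq_zero.1 (tendsto_nhds_unique
    ((hhorizontal Set.left_mem_uIcc).sub (hhorizontal Set.right_mem_uIcc)) hdiff)

end ContourShift

section PowerBounds

lemma norm_add_pow_sub_pow_le {R : Type*} [SeminormedRing R] [NormOneClass R] (a b : R) (n : ℕ) :
    ‖(a + b) ^ n - a ^ n‖ ≤ (‖a‖ + ‖b‖) ^ n - ‖a‖ ^ n := by
  induction n with
  | zero => simp
  | succ n ih =>
    calc ‖(a + b) ^ (n + 1) - a ^ (n + 1)‖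
        = ‖((a + b) ^ n - a ^ n) * (a + b) + a ^ n * b‖ := by congr 1; noncomm_ring
      _ ≤ ‖(a + b) ^ n - a ^ n‖ * ‖a + b‖ + ‖a ^ n‖ * ‖b‖ :=
        (norm_add_le _ _).trans (by gcongr <;> exact norm_mul_le _ _)
      _ ≤ ((‖a‖ + ‖b‖) ^ n - ‖a‖ ^ n) * (‖a‖ + ‖b‖) + ‖a‖ ^ n * ‖b‖ := by
        gcongr
        · exact (norm_nonneg _).trans ih
        · exact norm_add_le a b
        · exact norm_pow_le a n
      _ = (‖a‖ + ‖b‖) ^ (n + 1) - ‖a‖ ^ (n + 1) := by ring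

lemma exists_add_pow_le_one_add_mul_pow_add (n : ℕ) {ε : ℝ} (hε : 0 < ε) :
    ∃ C > 0, ∀ x y : ℝ, 0 ≤ x → 0 ≤ y → (x + y) ^ n ≤ (1 + ε) * x ^ n + C * y ^ n := by
  obtain ⟨δ, hδε, hδ⟩ : ∃ δ : ℝ, (1 + δ) ^ n < 1 + ε ∧ 0 < δ := by
    have hlim : Tendsto (fun δ : ℝ ↦ (1 + δ) ^ n) (𝓝[>] 0) (𝓝 1) :=
      tendsto_nhdsWithin_of_tendsto_nhds (by
        simpa using (show Continuous fun δ : ℝ ↦ (1 + δ) ^ n by fun_prop).tendsto 0)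
    exact ((hlim.eventually_lt_const (by linarith)).and self_mem_nhdsWithin).exists
  refine ⟨(δ⁻¹ + 1) ^ n, by positivity, fun x y hx hy ↦ ?_⟩
  rcases le_total y (δ * x) with hyx | hxy
  · calc (x + y) ^ n ≤ ((1 + δ) * x) ^ n := by gcongr; linarith
      _ = (1 + δ) ^ n * x ^ n := mul_pow ..
      _ ≤ (1 + ε) * x ^ n := by gcongr
      _ ≤ (1 + ε) * x ^ n + (δ⁻¹ + 1) ^ n * y ^ n := le_add_of_nonneg_right (by positivity)
  · have hx' : x ≤ δ⁻¹ * y := (le_inv_mul_iff₀ hδ).2 hxy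
    calc (x + y) ^ n ≤ ((δ⁻¹ + 1) * y) ^ n := by gcongr; linarith
      _ = (δ⁻¹ + 1) ^ n * y ^ n := mul_pow ..
      _ ≤ (1 + ε) * x ^ n + (δ⁻¹ + 1) ^ n * y ^ n := le_add_of_nonneg_left (by positivity)

lemma exists_re_pow_ge {n : ℕ} (hn : Even n) {ε : ℝ} (hε : 0 < ε) :
    ∃ C > 0, ∀ z : ℂ, (1 - ε) * z.re ^ n - C * z.im ^ n ≤ (z ^ n).re := by
  obtain ⟨C, hC, hadd⟩ := exists_add_pow_le_one_add_mul_pow_add n hε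
  refine ⟨C, hC, fun z ↦ ?_⟩
  have hdist : z.re ^ n - (z ^ n).re ≤ (|z.re| + |z.im|) ^ n - |z.re| ^ n := by
    calc z.re ^ n - (z ^ n).re = -(z ^ n - (z.re : ℂ) ^ n).re := by
          rw [← Complex.ofReal_pow, Complex.sub_re, Complex.ofReal_re, neg_sub]
      _ ≤ ‖z ^ n - (z.re : ℂ) ^ n‖ := (neg_le_abs _).trans (Complex.abs_re_le_norm _)
      _ ≤ (|z.re| + |z.im|) ^ n - |z.re| ^ n := by
        simpa using norm_add_pow_sub_pow_le (z.re : ℂ) (z.im * Complex.I) n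
  have hsum := hadd |z.re| |z.im| (abs_nonneg _) (abs_nonneg _)
  rw [hn.pow_abs, hn.pow_abs] at hsum
  rw [hn.pow_abs] at hdist
  linarith

lemma exists_rpow_le_mul_rpow_add {a b c : ℝ} (ha : 0 ≤ a) (hab : a < b) (hc : 0 < c) :
    ∃ M, ∀ x : ℝ, 0 ≤ x → x ^ a ≤ c * x ^ b + M := by
  set R : ℝ := c⁻¹ ^ (b - a)⁻¹
  have hR : 0 < R := by positivity
  refine ⟨R ^ a, fun x hx ↦ ?_⟩
  rcases le_total x R with hxR | hRx
  · calc x ^ a ≤ R ^ a := by gcongr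
      _ ≤ c * x ^ b + R ^ a := le_add_of_nonneg_left (by positivity)
  · have hone : 1 ≤ c * x ^ (b - a) := by
      rw [← inv_le_iff_one_le_mul₀' hc]
      calc c⁻¹ = R ^ (b - a) := (Real.rpow_inv_rpow (by positivity) (sub_pos.2 hab).ne').symm
        _ ≤ x ^ (b - a) := Real.rpow_le_rpow hR.le hRx (sub_pos.2 hab).le
    calc x ^ a ≤ c * x ^ (b - a) * x ^ a := le_mul_of_one_le_left (by positivity) hone
      _ = c * x ^ b := by rw [mul_assoc, ← Real.rpow_add (hR.trans_le hRx), sub_add_cancel]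
      _ ≤ c * x ^ b + R ^ a := le_add_of_nonneg_right (by positivity)

lemma exists_mul_add_mul_abs_rpow_le {p q C : ℝ} (hpq : p.HolderConjugate q) (hC : 0 < C) :
    ∃ c > 0, ∀ ρ : ℝ, ∃ y : ℝ, ρ * y + C * |y| ^ q ≤ -(c * |ρ| ^ p) := by
  -- The minimizing `y` is a multiple of `|ρ| ^ (p - 1)`; this factor makes the second summand half
  -- the size of the first.
  set δ : ℝ := (2 * C) ^ (1 - p) with hδ
  have hδ_pos : 0 < δ := by positivity
  have hδ_rpow : C * δ ^ q = δ / 2 := by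
    have hexp : (1 - p) * (q - 1) = -1 := by linarith [hpq.mul_eq_add]
    have hδ_sub : δ ^ (q - 1) = (2 * C)⁻¹ := by
      rw [hδ, ← Real.rpow_mul (by positivity), hexp, Real.rpow_neg_one]
    rw [← sub_add_cancel q 1, Real.rpow_add_one hδ_pos.ne', hδ_sub]
    field_simp
  refine ⟨δ / 2, by positivity, fun ρ ↦ ?_⟩
  obtain ⟨s, hs, hρs⟩ : ∃ s : ℝ, |s| = 1 ∧ ρ * s = |ρ| := by
    rcases abs_choice ρ with h | h
    · exact ⟨1, by simp, by simp [h]⟩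
    · exact ⟨-1, by simp, by simp [h]⟩
  refine ⟨-s * (δ * |ρ| ^ (p - 1)), le_of_eq ?_⟩
  have habs : |-s * (δ * |ρ| ^ (p - 1))| ^ q = δ ^ q * |ρ| ^ p := by
    rw [abs_mul, abs_neg, hs, one_mul, abs_of_nonneg (by positivity),
      Real.mul_rpow hδ_pos.le (by positivity), ← Real.rpow_mul (abs_nonneg ρ), hpq.sub_one_mul_conj]
  have hmul : |ρ| * |ρ| ^ (p - 1) = |ρ| ^ p := by
    rw [← Real.rpow_one_add' (abs_nonneg ρ) (by simpa using hpq.ne_zero), add_sub_cancel]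
  calc ρ * (-s * (δ * |ρ| ^ (p - 1))) + C * |-s * (δ * |ρ| ^ (p - 1))| ^ q
      = -(δ * (ρ * s * |ρ| ^ (p - 1))) + C * δ ^ q * |ρ| ^ p := by rw [habs]; ring
    _ = -(δ / 2 * |ρ| ^ p) := by rw [hρs, hmul, hδ_rpow]; ring

end PowerBounds

section ExpNegPow

variable {n : ℕ} {b : ℝ}

lemma integrable_exp_neg_mul_pow (hn : Even n) (hn₀ : n ≠ 0) (hb : 0 < b) :
    Integrable fun x : ℝ ↦ Real.exp (-(b * x ^ n)) := by
  obtain ⟨k, rfl⟩ := hn.two_dvd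
  have hk : k ≠ 0 := by rintro rfl; simp at hn₀
  have hsq (x : ℝ) : x ^ 2 ≤ 1 + x ^ (2 * k) := by
    rw [pow_mul]
    rcases le_total 1 (x ^ 2) with h | h
    · linarith [le_self_pow₀ h hk]
    · linarith [pow_nonneg (sq_nonneg x) k]
  refine ((integrable_exp_neg_mul_sq hb).const_mul (Real.exp b)).mono' (by fun_prop)
    (Eventually.of_forall fun x ↦ ?_)
  rw [Real.norm_eq_abs, Real.abs_exp, ← Real.exp_add, Real.exp_le_exp]
  nlinarith [hsq x]

lemma tendsto_exp_neg_mul_pow_cocompact (hn : Even n) (hn₀ : n ≠ 0) (hb : 0 < b) :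
    Tendsto (fun x : ℝ ↦ Real.exp (-(b * x ^ n))) (cocompact ℝ) (𝓝 0) := by
  have hpow : Tendsto (fun x : ℝ ↦ x ^ n) (cocompact ℝ) atTop :=
    ((tendsto_pow_atTop hn₀).comp (tendsto_norm_cocompact_atTop (E := ℝ))).congr
      fun x ↦ hn.pow_abs x
  exact Real.tendsto_exp_neg_atTop_nhds_zero.comp (hpow.const_mul_atTop hb)

end ExpNegPow

section FourierExpNegPow

variable {n : ℕ}

lemma exists_norm_cexp_fourier_le (hn : Even n) :
    ∃ C > 0, ∀ (ρ : ℝ) (z : ℂ), ‖Complex.exp (-(Complex.I * ρ * z) - z ^ n)‖ ≤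
      Real.exp (ρ * z.im + C * z.im ^ n) * Real.exp (-(1 / 2 * z.re ^ n)) := by
  obtain ⟨C, hC, hre⟩ := exists_re_pow_ge hn one_half_pos
  refine ⟨C, hC, fun ρ z ↦ ?_⟩
  have hlin : (-(Complex.I * ρ * z)).re = ρ * z.im := by simp
  rw [Complex.norm_exp, ← Real.exp_add, Real.exp_le_exp, Complex.sub_re, hlin]
  linarith [hre z]

lemma integral_cexp_fourier_eq_integral_add_mul_I (hn : Even n) (hn₀ : n ≠ 0) (ρ y : ℝ) :
    ∫ x : ℝ, Complex.exp (-(Complex.I * ρ * x) - x ^ n) =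
      ∫ x : ℝ, Complex.exp (-(Complex.I * ρ * (x + y * Complex.I)) - (x + y * Complex.I) ^ n) := by
  obtain ⟨C, hC, hnorm⟩ := exists_norm_cexp_fourier_le hn
  set B : ℝ := Real.exp (|ρ| * |y| + C * y ^ n)
  have hbound (x t : ℝ) (ht : t ∈ Set.uIcc 0 y) :
      ‖Complex.exp (-(Complex.I * ρ * (x + t * Complex.I)) - (x + t * Complex.I) ^ n)‖ ≤
        B * Real.exp (-(1 / 2 * x ^ n)) := by
    have hty : |t| ≤ |y| := by simpa using Set.abs_sub_left_of_mem_uIcc ht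
    have hlin : ρ * t ≤ |ρ| * |y| :=
      (le_abs_self _).trans ((abs_mul ρ t).trans_le (by gcongr))
    have hpow : t ^ n ≤ y ^ n := by
      rw [← hn.pow_abs t, ← hn.pow_abs y]
      gcongr
    calc ‖Complex.exp (-(Complex.I * ρ * (x + t * Complex.I)) - (x + t * Complex.I) ^ n)‖
        ≤ Real.exp (ρ * t + C * t ^ n) * Real.exp (-(1 / 2 * x ^ n)) := by
          simpa using hnorm ρ (x + t * Complex.I)
      _ ≤ B * Real.exp (-(1 / 2 * x ^ n)) := by
        gcongr
        exact Real.exp_le_exp.2 (by gcongr)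
  simpa using integral_horizontal_eq_of_differentiableOn
    (f := fun z ↦ Complex.exp (-(Complex.I * ρ * z) - z ^ n)) (by fun_prop)
    ((integrable_exp_neg_mul_pow hn hn₀ one_half_pos).const_mul B)
    (by simpa using (tendsto_exp_neg_mul_pow_cocompact hn hn₀ one_half_pos).const_mul B) hbound

lemma exists_norm_integral_cexp_fourier_le (hn : Even n) (hn₀ : n ≠ 0) :
    ∃ C > 0, ∃ K > 0, ∀ ρ y : ℝ, ‖∫ x : ℝ, Complex.exp (-(Complex.I * ρ * x) - x ^ n)‖ ≤
      K * Real.exp (ρ * y + C * y ^ n) := by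
  obtain ⟨C, hC, hnorm⟩ := exists_norm_cexp_fourier_le hn
  have hint := integrable_exp_neg_mul_pow hn hn₀ one_half_pos
  refine ⟨C, hC, ∫ x : ℝ, Real.exp (-(1 / 2 * x ^ n)), integral_exp_pos hint, fun ρ y ↦ ?_⟩
  rw [integral_cexp_fourier_eq_integral_add_mul_I hn hn₀ ρ y,
    mul_comm (integral _ _), ← integral_const_mul]
  refine norm_integral_le_of_norm_le (hint.const_mul _) (Eventually.of_forall fun x ↦ ?_)
  simpa using hnorm ρ (x + y * Complex.I)

theorem exists_norm_integral_cexp_fourier_le_exp_neg_rpow (hn : Even n) (hn₀ : n ≠ 0) :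
    ∃ c > 0, ∃ K > 0, ∀ ρ : ℝ, ‖∫ x : ℝ, Complex.exp (-(Complex.I * ρ * x) - x ^ n)‖ ≤
      K * Real.exp (-(c * |ρ| ^ (n / (n - 1) : ℝ))) := by
  obtain ⟨C, hC, K, hK, hle⟩ := exists_norm_integral_cexp_fourier_le hn hn₀
  have hn₁ : 1 < (n : ℝ) := by
    obtain ⟨k, rfl⟩ := hn
    exact_mod_cast (by lia : 1 < k + k)
  obtain ⟨c, hc, hlegendre⟩ :=
    exists_mul_add_mul_abs_rpow_le (Real.HolderConjugate.conjExponent hn₁).symm hC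
  refine ⟨c, hc, K, hK, fun ρ ↦ ?_⟩
  obtain ⟨y, hy⟩ := hlegendre ρ
  rw [Real.rpow_natCast, hn.pow_abs] at hy
  exact (hle ρ y).trans (by gcongr; exact hy)

end FourierExpNegPow

lemma phiFT_eq_integral_cexp (m : ℕ) (ρ : ℝ) :
    phiFT m ρ =
      (1 / (2 * Real.pi) : ℝ) * ∫ x : ℝ, Complex.exp (-(Complex.I * ρ * x) - x ^ (2 * m)) := by
  simp [phiFT, sub_eq_add_neg, Complex.exp_add]

theorem exists_norm_phiFT_le_exp_neg_mul_rpow {m : ℕ} (hm : 0 < m) :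
    ∃ c > 0, ∃ K > 0, ∀ ρ : ℝ,
      ‖phiFT m ρ‖ ≤ K * Real.exp (-(c * |ρ| ^ (2 * m / (2 * m - 1) : ℝ))) := by
  obtain ⟨c, hc, K, hK, hle⟩ :=
    exists_norm_integral_cexp_fourier_le_exp_neg_rpow (even_two_mul m) (by lia)
  refine ⟨c, hc, 1 / (2 * Real.pi) * K, by positivity, fun ρ ↦ ?_⟩
  rw [phiFT_eq_integral_cexp, norm_mul, Complex.norm_of_nonneg (by positivity), mul_assoc]
  gcongr
  exact_mod_cast hle ρ

theorem stmt1 (m : ℕ) (hm : 0 < m) :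
    ∃ C > 0, ∀ ρ : ℝ,
      ‖phiFT m ρ‖ ≤ C * Real.exp (-(|ρ| ^ (1 + 1 / (2 * (m : ℝ))))) := by
  have hexponent : 1 + 1 / (2 * (m : ℝ)) < 2 * m / (2 * m - 1) := by
    have hm₁ : (1 : ℝ) ≤ m := by exact_mod_cast hm
    rw [lt_div_iff₀ (by linarith)]
    field_simp
    linarith
  obtain ⟨c, hc, K, hK, hsharp⟩ := exists_norm_phiFT_le_exp_neg_mul_rpow hm
  obtain ⟨M, hM⟩ := exists_rpow_le_mul_rpow_add (by positivity) hexponent hc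
  refine ⟨K * Real.exp M, by positivity, fun ρ ↦ (hsharp ρ).trans ?_⟩
  rw [mul_assoc, ← Real.exp_add]
  gcongr
  linarith [hM |ρ| (abs_nonneg ρ)]
end

section
/- The integral ∫_{ℝ^N} e^{-xᵀKx − P(x)} dx admits the representation ∫_{ℝ^N} e^{-xᵀKx − P(x)} dx = e^{M} · ∫_ℝ φ_m(ρ) ( ∫_{ℝ^N} e^{-xᵀKx} e^{iρ · P̃(x)^{1/(2m)}} dx ) dρ; in particular the order of the ρ-integration and x-integration on the right-hand side may be interchanged. -/
open MeasureTheory Matrix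

/-!
For `y ≥ 0`, Fourier inversion applied to the Schwartz function `r ↦ e^{-r^{2m}}` and evaluated at
`r = y^{1/(2m)}` writes `e^{-y}` as a superposition of the phases `e^{iρ y^{1/(2m)}}` with weights
`φ_m(ρ)`. Taking `y = P(x) + M` and integrating against `e^{-xᵀKx}` gives the representation. The
weight `φ_m` is integrable, being again a rescaled Schwartz function, the Gaussian weight is
integrable because `K` is coercive, and the phases have modulus one, so Fubini's theorem applies.
-/

section SchwartzExpNeg

open Polynomial
open scoped Nat SchwartzMap

theorem iteratedDeriv_exp_neg_eval (q : ℝ[X]) (n : ℕ) :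
    iteratedDeriv n (fun x => Real.exp (-q.eval x)) =
      fun x => ((fun r => derivative r - r * derivative q)^[n] 1).eval x *
        Real.exp (-q.eval x) := by
  induction n with
  | zero => simp
  | succ n ih =>
    rw [iteratedDeriv_succ, ih, Function.iterate_succ_apply']
    funext x
    generalize (fun r => derivative r - r * derivative q)^[n] 1 = r
    rw [((r.hasDerivAt x).fun_mul (q.hasDerivAt x).fun_neg.exp).deriv, eval_sub, eval_mul]
    ring

theorem abs_pow_mul_exp_neg_le {x y C : ℝ} (h : |x| ≤ C + y) (k : ℕ) :
    |x| ^ k * Real.exp (-y) ≤ k ! * Real.exp C := by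
  have hpow : |x| ^ k ≤ Real.exp |x| * k ! :=
    (div_le_iff₀ (by positivity)).1 (Real.pow_div_factorial_le_exp |x| (abs_nonneg x) k)
  calc |x| ^ k * Real.exp (-y)
      ≤ Real.exp |x| * k ! * Real.exp (-y) := by gcongr
    _ = k ! * Real.exp (|x| - y) := by rw [sub_eq_add_neg, Real.exp_add]; ring
    _ ≤ k ! * Real.exp C := by gcongr; linarith

theorem exists_abs_eval_mul_exp_neg_le {f : ℝ → ℝ} {C : ℝ} (hf : ∀ x, |x| ≤ C + f x)
    (r : ℝ[X]) : ∃ B, ∀ x, |r.eval x| * Real.exp (-f x) ≤ B := by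
  induction r using Polynomial.induction_on' with
  | add r s hr hs =>
    obtain ⟨B, hB⟩ := hr
    obtain ⟨D, hD⟩ := hs
    refine ⟨B + D, fun x => ?_⟩
    calc |(r + s).eval x| * Real.exp (-f x)
        ≤ (|r.eval x| + |s.eval x|) * Real.exp (-f x) := by
          rw [eval_add]
          gcongr
          exact abs_add_le _ _
      _ ≤ B + D := by rw [add_mul]; exact add_le_add (hB x) (hD x)
  | monomial n a =>
    refine ⟨|a| * (n ! * Real.exp C), fun x => ?_⟩
    rw [eval_monomial, abs_mul, abs_pow, mul_assoc]
    exact mul_le_mul_of_nonneg_left (abs_pow_mul_exp_neg_le (hf x) n) (abs_nonneg a)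

/-- The Schwartz function `x ↦ e^{-q(x)}` attached to a real polynomial `q`. That `q` tends to
infinity at both ends is encoded as a linear lower bound. -/
noncomputable def schwartzExpNeg (q : ℝ[X]) {C : ℝ} (hq : ∀ x, |x| ≤ C + q.eval x) :
    𝓢(ℝ, ℝ) where
  toFun x := Real.exp (-q.eval x)
  smooth' := by simpa using (q.contDiff_aeval (𝕜 := ℝ) _).neg.exp
  decay' k n := by
    set r := (fun r => derivative r - r * derivative q)^[n] 1
    obtain ⟨B, hB⟩ := exists_abs_eval_mul_exp_neg_le hq (X ^ k * r)
    refine ⟨B, fun x => ?_⟩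
    calc ‖x‖ ^ k * ‖iteratedFDeriv ℝ n (fun x => Real.exp (-q.eval x)) x‖
        = |(X ^ k * r).eval x| * Real.exp (-q.eval x) := by
          rw [norm_iteratedFDeriv_eq_norm_iteratedDeriv, iteratedDeriv_exp_neg_eval, eval_mul,
            eval_pow, eval_X, abs_mul, abs_pow, norm_mul, Real.norm_eq_abs, Real.norm_eq_abs,
            Real.norm_of_nonneg (Real.exp_nonneg _), mul_assoc]
      _ ≤ B := hB x

theorem schwartzExpNeg_apply (q : ℝ[X]) {C : ℝ} (hq : ∀ x, |x| ≤ C + q.eval x) (x : ℝ) :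
    schwartzExpNeg q hq x = Real.exp (-q.eval x) :=
  rfl

end SchwartzExpNeg

section AngularFourier

open scoped FourierTransform Real SchwartzMap

variable {E : Type*} [NormedAddCommGroup E] [NormedSpace ℂ E]

/-- The Fourier transform in the angular frequency `ρ`, with the factor `1/(2π)` placed on the
transform, so that the inverse transform is `r ↦ ∫ e^{iρr} g(ρ) dρ`. -/
noncomputable def angularFourier (f : ℝ → E) (ρ : ℝ) : E :=
  (1 / (2 * π) : ℂ) • ∫ r : ℝ, Complex.exp (-(Complex.I * ρ * r)) • f r

theorem angularFourier_eq_fourier (f : ℝ → E) (ρ : ℝ) :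
    angularFourier f ρ = (1 / (2 * π) : ℂ) • 𝓕 f (ρ / (2 * π)) := by
  rw [angularFourier, Real.fourier_real_eq_integral_exp_smul]
  congr! 5 with r
  push_cast
  field_simp

theorem integrable_angularFourier {f : ℝ → E} (hf : Integrable (𝓕 f)) :
    Integrable (angularFourier f) := by
  rw [funext (angularFourier_eq_fourier f)]
  exact (hf.comp_div (by positivity)).smul _

theorem integral_cexp_smul_angularFourier [CompleteSpace E] {f : ℝ → E} (hcont : Continuous f)
    (hint : Integrable f) (hfourier : Integrable (𝓕 f)) (r : ℝ) :
    ∫ ρ : ℝ, Complex.exp (Complex.I * ρ * r) • angularFourier f ρ = f r := by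
  let g (v : ℝ) : E := Complex.exp (↑(2 * π * inner ℝ v r) * Complex.I) • 𝓕 f v
  have hg (ρ : ℝ) : Complex.exp (Complex.I * ρ * r) • angularFourier f ρ =
      (1 / (2 * π) : ℝ) • g (ρ / (2 * π)) := by
    have hphase : Complex.I * ρ * r = ↑(2 * π * inner ℝ (ρ / (2 * π)) r) * Complex.I := by
      rw [real_inner_comm, Real.inner_apply]
      push_cast
      field_simp
    rw [angularFourier_eq_fourier, hphase, smul_comm, ← Complex.coe_smul]
    simp [g]
  calc ∫ ρ : ℝ, Complex.exp (Complex.I * ρ * r) • angularFourier f ρ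
      = ∫ ρ : ℝ, (1 / (2 * π) : ℝ) • g (ρ / (2 * π)) := integral_congr_ae (ae_of_all _ hg)
    _ = ∫ v : ℝ, g v := by
      rw [integral_smul, Measure.integral_comp_div, abs_of_pos (by positivity), smul_smul,
        one_div_mul_cancel (by positivity), one_smul]
    _ = f r := by
      rw [← Real.fourierInv_eq', hcont.fourierInv_fourier_eq hint hfourier]

end AngularFourier

section PhiFT

open scoped FourierTransform SchwartzMap

theorem abs_le_one_add_pow_of_even {n : ℕ} (hn : Even n) (hn₀ : n ≠ 0) (x : ℝ) :
    |x| ≤ 1 + x ^ n := by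
  rw [← hn.pow_abs]
  rcases le_total |x| 1 with hx | hx
  · linarith [pow_nonneg (abs_nonneg x) n]
  · linarith [le_self_pow₀ hx hn₀]

theorem phiFT_eq_angularFourier (m : ℕ) :
    phiFT m = angularFourier fun r => ((Real.exp (-r ^ (2 * m)) : ℝ) : ℂ) :=
  rfl

theorem exists_schwartzMap_eq_exp_neg_pow {m : ℕ} (hm : 0 < m) :
    ∃ f : 𝓢(ℝ, ℂ), ⇑f = fun r => ((Real.exp (-r ^ (2 * m)) : ℝ) : ℂ) := by
  have hgrowth (x : ℝ) : |x| ≤ 1 + (Polynomial.X ^ (2 * m)).eval x := by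
    simpa using abs_le_one_add_pow_of_even (even_two_mul m) (by lia) x
  refine ⟨SchwartzMap.postcompCLM Complex.ofRealCLM (schwartzExpNeg _ hgrowth), ?_⟩
  funext r
  simp [schwartzExpNeg_apply]

theorem integrable_phiFT {m : ℕ} (hm : 0 < m) : Integrable (phiFT m) := by
  obtain ⟨f, hf⟩ := exists_schwartzMap_eq_exp_neg_pow hm
  rw [phiFT_eq_angularFourier, ← hf]
  exact integrable_angularFourier (𝓕 f).integrable

theorem integral_phiFT_mul_cexp {m : ℕ} (hm : 0 < m) (r : ℝ) :
    ∫ ρ : ℝ, phiFT m ρ * Complex.exp (Complex.I * ρ * r) = Real.exp (-r ^ (2 * m)) := by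
  obtain ⟨f, hf⟩ := exists_schwartzMap_eq_exp_neg_pow hm
  have hinv := integral_cexp_smul_angularFourier f.continuous f.integrable (𝓕 f).integrable r
  simp only [hf, ← phiFT_eq_angularFourier, smul_eq_mul] at hinv
  simpa only [mul_comm] using hinv

theorem integral_phiFT_mul_cexp_root {m : ℕ} (hm : 0 < m) {y : ℝ} (hy : 0 ≤ y) :
    ∫ ρ : ℝ, phiFT m ρ *
      Complex.exp (Complex.I * ρ * ((y ^ ((1 : ℝ) / (2 * m)) : ℝ) : ℂ)) = Real.exp (-y) := by
  have hroot : (y ^ ((1 : ℝ) / (2 * m))) ^ (2 * m) = y := by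
    simpa using Real.rpow_inv_natCast_pow hy (n := 2 * m) (by lia)
  rw [integral_phiFT_mul_cexp hm, hroot]

end PhiFT

section Gaussian

variable {ι : Type*} [Fintype ι] {K : Matrix ι ι ℝ}

open scoped MatrixOrder Matrix.Norms.L2Operator in
theorem exists_pos_mul_dotProduct_self_le (hK : K.PosDef) :
    ∃ c > 0, ∀ x : ι → ℝ, c * (x ⬝ᵥ x) ≤ x ⬝ᵥ K *ᵥ x := by
  classical
  cases isEmpty_or_nonempty ι
  · exact ⟨1, one_pos, fun x => by simp⟩
  obtain ⟨c, hc, hcK⟩ := (CFC.exists_pos_algebraMap_le_iff hK.isHermitian).2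
    fun _ => hK.isStrictlyPositive.spectrum_pos
  refine ⟨c, hc, fun x => ?_⟩
  have hdiff := (Matrix.le_iff.1 hcK).dotProduct_mulVec_nonneg x
  simpa [sub_mulVec, Algebra.algebraMap_eq_smul_one, smul_mulVec] using hdiff

theorem integrable_exp_neg_mul_dotProduct_self {c : ℝ} (hc : 0 < c) :
    Integrable fun x : ι → ℝ => Real.exp (-(c * (x ⬝ᵥ x))) := by
  have hprod := Integrable.fintype_prod (μ := fun _ : ι => volume)
    fun _ => integrable_exp_neg_mul_sq hc
  refine hprod.congr (ae_of_all _ fun x => ?_)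
  simp only [dotProduct, ← Real.exp_sum, Finset.mul_sum, ← Finset.sum_neg_distrib, neg_mul, sq]

theorem integrable_exp_neg_dotProduct_mulVec (hK : K.PosDef) :
    Integrable fun x : ι → ℝ => Real.exp (-(x ⬝ᵥ K *ᵥ x)) := by
  obtain ⟨c, hc, hcK⟩ := exists_pos_mul_dotProduct_self_le hK
  refine (integrable_exp_neg_mul_dotProduct_self hc).mono' ?_ (ae_of_all _ fun x => ?_)
  · exact Continuous.aestronglyMeasurable (by fun_prop)
  · rw [Real.norm_of_nonneg (Real.exp_nonneg _)]
    exact Real.exp_le_exp.2 (neg_le_neg (hcK x))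

end Gaussian

section Superposition

variable {α : Type*} [MeasurableSpace α] {μ : Measure α}
  {φ : ℝ → ℂ} {w : α → ℂ} {V : α → ℝ}

theorem integrable_mul_mul_cexp
    (hφ : Integrable φ) (hw : Integrable w μ) (hV : AEMeasurable V μ) :
    Integrable (fun z : ℝ × α => φ z.1 * w z.2 * Complex.exp (Complex.I * z.1 * V z.2))
      (volume.prod μ) := by
  refine (hφ.mul_prod hw).mul_bdd (c := 1) ?_ (ae_of_all _ fun z => ?_)
  · have hphase := (measurable_fst.complex_ofReal.const_mul Complex.I).aemeasurable.mul
      (hV.comp_snd (μ := (volume : Measure ℝ))).complex_ofReal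
    exact hphase.cexp.aestronglyMeasurable
  · rw [mul_assoc, ← Complex.ofReal_mul, Complex.norm_exp_I_mul_ofReal]

theorem integral_integral_mul_cexp_swap [SFinite μ]
    (hφ : Integrable φ) (hw : Integrable w μ) (hV : AEMeasurable V μ) :
    ∫ ρ : ℝ, ∫ x, φ ρ * w x * Complex.exp (Complex.I * ρ * V x) ∂μ =
      ∫ x, (∫ ρ : ℝ, φ ρ * w x * Complex.exp (Complex.I * ρ * V x)) ∂μ :=
  integral_integral_swap (integrable_mul_mul_cexp hφ hw hV)

theorem integral_mul_integral_mul_cexp [SFinite μ]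
    (hφ : Integrable φ) (hw : Integrable w μ) (hV : AEMeasurable V μ) :
    ∫ ρ : ℝ, φ ρ * ∫ x, w x * Complex.exp (Complex.I * ρ * V x) ∂μ =
      ∫ x, w x * (∫ ρ : ℝ, φ ρ * Complex.exp (Complex.I * ρ * V x)) ∂μ := by
  simp only [← integral_const_mul, ← mul_assoc]
  rw [integral_integral_mul_cexp_swap hφ hw hV]
  simp only [mul_comm (w _)]

theorem stmt5_general [SFinite μ] {m : ℕ} (hm : 0 < m) {Q P : α → ℝ} {M : ℝ}
    (hQ : Integrable (fun x => Real.exp (-Q x)) μ) (hP : AEMeasurable P μ)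
    (hPbound : ∀ᵐ x ∂μ, -M ≤ P x) :
    ((∫ x, Real.exp (-Q x - P x) ∂μ : ℝ) : ℂ) =
        (Real.exp M : ℂ) *
          ∫ ρ : ℝ, phiFT m ρ *
            ∫ x, Complex.exp (-(Q x : ℂ)) *
              Complex.exp (Complex.I * ρ * (((P x + M) ^ ((1 : ℝ) / (2 * m)) : ℝ) : ℂ)) ∂μ ∧
      ∫ ρ : ℝ, ∫ x,
          phiFT m ρ * Complex.exp (-(Q x : ℂ)) *
            Complex.exp (Complex.I * ρ * (((P x + M) ^ ((1 : ℝ) / (2 * m)) : ℝ) : ℂ)) ∂μ =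
        ∫ x, (∫ ρ : ℝ,
          phiFT m ρ * Complex.exp (-(Q x : ℂ)) *
            Complex.exp (Complex.I * ρ * (((P x + M) ^ ((1 : ℝ) / (2 * m)) : ℝ) : ℂ))) ∂μ := by
  have hφ := integrable_phiFT hm
  have hw : Integrable (fun x => Complex.exp (-(Q x : ℂ))) μ := by simpa using hQ.ofReal (𝕜 := ℂ)
  have hV := (hP.add_const M).pow_const ((1 : ℝ) / (2 * m))
  refine ⟨?_, integral_integral_mul_cexp_swap hφ hw hV⟩
  rw [integral_mul_integral_mul_cexp hφ hw hV, ← integral_const_mul, ← integral_complex_ofReal]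
  refine integral_congr_ae (hPbound.mono fun x hx => ?_)
  have hsplit : Real.exp (-Q x - P x) =
      Real.exp M * (Real.exp (-Q x) * Real.exp (-(P x + M))) := by
    rw [← Real.exp_add, ← Real.exp_add]
    ring_nf
  simp only [integral_phiFT_mul_cexp_root hm (neg_le_iff_add_nonneg.1 hx), hsplit]
  push_cast
  rfl

end Superposition

theorem stmt5 (N m : ℕ) (hN : 0 < N) (hm : 0 < m)
    (p : MvPolynomial (Fin N) ℝ) (hdeg : p.totalDegree = 2 * m)
    (M : ℝ) (hM : 0 ≤ M) (hPbound : ∀ x : Fin N → ℝ, -M ≤ MvPolynomial.eval x p)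
    (K : Matrix (Fin N) (Fin N) ℝ) (hK : K.PosDef) :
    (((∫ x : Fin N → ℝ, Real.exp (-(x ⬝ᵥ K *ᵥ x) - MvPolynomial.eval x p) : ℝ) : ℂ) =
        (Real.exp M : ℂ) *
          ∫ ρ : ℝ, phiFT m ρ *
            ∫ x : Fin N → ℝ, Complex.exp (-((x ⬝ᵥ K *ᵥ x : ℝ) : ℂ)) *
              Complex.exp (Complex.I * (ρ : ℂ) *
                (((MvPolynomial.eval x p + M) ^ ((1 : ℝ) / (2 * m)) : ℝ) : ℂ))) ∧
      ((∫ ρ : ℝ, ∫ x : Fin N → ℝ,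
          phiFT m ρ * Complex.exp (-((x ⬝ᵥ K *ᵥ x : ℝ) : ℂ)) *
            Complex.exp (Complex.I * (ρ : ℂ) *
              (((MvPolynomial.eval x p + M) ^ ((1 : ℝ) / (2 * m)) : ℝ) : ℂ))) =
        ∫ x : Fin N → ℝ, ∫ ρ : ℝ,
          phiFT m ρ * Complex.exp (-((x ⬝ᵥ K *ᵥ x : ℝ) : ℂ)) *
            Complex.exp (Complex.I * (ρ : ℂ) *
              (((MvPolynomial.eval x p + M) ^ ((1 : ℝ) / (2 * m)) : ℝ) : ℂ))) :=
  stmt5_general hm (integrable_exp_neg_dotProduct_mulVec hK) p.continuous_eval.aemeasurable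
    (ae_of_all _ hPbound)
end

section
/- For every R > 0, the double series of absolute values is finite: ∑_{n=0}^∞ (1/n!) ∫_{-R}^{R} ∫_{ℝ^N} |φ_m(ρ)| · |ρ|^n · P̃(x)^{n/(2m)} · e^{-xᵀKx} dx dρ < ∞. -/
/-!
By Tonelli, summing over `n` first turns the series into
`∫_{-R}^{R} ∫ |φ(ρ)| exp(|ρ| P̃(x)^{1/(2m)}) e^{-xᵀKx} dx dρ`. Since `P̃` has degree `2m`, its
`2m`-th root grows at most linearly, so the Gaussian weight dominates the exponential uniformly in
`|ρ| ≤ R`; what remains is the integral of `|φ|` over a compact interval.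
-/

open MeasureTheory Matrix

open Set
open scoped ENNReal

lemma tsum_inv_factorial_mul_lintegral_pow_mul {α : Type*} [MeasurableSpace α] {μ : Measure α}
    {u w : α → ℝ} (hu : AEMeasurable u μ) (hw : AEMeasurable w μ) (hu_nonneg : ∀ x, 0 ≤ u x)
    (hw_nonneg : ∀ x, 0 ≤ w x) :
    ∑' n : ℕ, (n.factorial : ℝ≥0∞)⁻¹ * ∫⁻ x, ENNReal.ofReal (u x ^ n * w x) ∂μ =
      ∫⁻ x, ENNReal.ofReal (Real.exp (u x) * w x) ∂μ := by
  have h_term (n : ℕ) : (n.factorial : ℝ≥0∞)⁻¹ * ∫⁻ x, ENNReal.ofReal (u x ^ n * w x) ∂μ =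
      ∫⁻ x, ENNReal.ofReal (u x ^ n / n.factorial * w x) ∂μ := by
    rw [← lintegral_const_mul'' _ (by fun_prop)]
    refine lintegral_congr fun x ↦ ?_
    rw [← ENNReal.ofReal_natCast, ← ENNReal.ofReal_inv_of_pos (by positivity),
      ← ENNReal.ofReal_mul (by positivity)]
    congr 1
    ring
  simp_rw [h_term]
  rw [← lintegral_tsum fun n ↦ by fun_prop]
  refine lintegral_congr fun x ↦ ?_
  have h_exp : HasSum (fun n : ℕ ↦ u x ^ n / n.factorial * w x) (Real.exp (u x) * w x) := by
    rw [Real.exp_eq_exp_ℝ]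
    exact (NormedSpace.expSeries_div_hasSum_exp (u x)).mul_right (w x)
  have h_nonneg (n : ℕ) : 0 ≤ u x ^ n / n.factorial * w x :=
    mul_nonneg (div_nonneg (pow_nonneg (hu_nonneg x) n) n.factorial.cast_nonneg) (hw_nonneg x)
  rw [← ENNReal.ofReal_tsum_of_nonneg h_nonneg h_exp.summable, h_exp.tsum_eq]

lemma tsum_inv_factorial_mul_lintegral_Icc_lintegral_lt_top {E α : Type*} [NormedAddCommGroup E]
    [MeasurableSpace α] {μ : Measure α} {φ : ℝ → E} {R : ℝ} {u w : α → ℝ} (hR : 0 ≤ R)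
    (hφ : IntegrableOn φ (Icc (-R) R)) (hu : AEMeasurable u μ) (hw : AEMeasurable w μ)
    (hu_nonneg : ∀ x, 0 ≤ u x) (hw_nonneg : ∀ x, 0 ≤ w x)
    (h_int : Integrable (fun x ↦ Real.exp (R * u x) * w x) μ) :
    ∑' n : ℕ, (n.factorial : ℝ≥0∞)⁻¹ * ∫⁻ ρ in Icc (-R) R, ∫⁻ x,
      ENNReal.ofReal (‖φ ρ‖ * |ρ| ^ n * u x ^ n * w x) ∂μ < ⊤ := by
  have h_pointwise {n : ℕ} {ρ : ℝ} (hρ : ρ ∈ Icc (-R) R) (x : α) :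
      ENNReal.ofReal (‖φ ρ‖ * |ρ| ^ n * u x ^ n * w x) ≤
        ‖φ ρ‖ₑ * ENNReal.ofReal ((R * u x) ^ n * w x) := by
    rw [← ofReal_norm, ← ENNReal.ofReal_mul (norm_nonneg _), mul_pow]
    simp only [mul_assoc]
    have := hu_nonneg x
    have := hw_nonneg x
    gcongr
    exact abs_le.2 hρ
  have h_term (n : ℕ) : ∫⁻ ρ in Icc (-R) R, ∫⁻ x,
      ENNReal.ofReal (‖φ ρ‖ * |ρ| ^ n * u x ^ n * w x) ∂μ ≤
        (∫⁻ ρ in Icc (-R) R, ‖φ ρ‖ₑ) * ∫⁻ x, ENNReal.ofReal ((R * u x) ^ n * w x) ∂μ := by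
    rw [← lintegral_mul_const'' _ hφ.aestronglyMeasurable.enorm]
    refine setLIntegral_mono' measurableSet_Icc fun ρ hρ ↦ ?_
    rw [← lintegral_const_mul'' _ (by fun_prop)]
    exact lintegral_mono (h_pointwise hρ)
  calc
    _ ≤ ∑' n : ℕ, (∫⁻ ρ in Icc (-R) R, ‖φ ρ‖ₑ) *
          ((n.factorial : ℝ≥0∞)⁻¹ * ∫⁻ x, ENNReal.ofReal ((R * u x) ^ n * w x) ∂μ) :=
      ENNReal.tsum_le_tsum fun n ↦ (mul_le_mul_right (h_term n) _).trans_eq (mul_left_comm ..)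
    _ = (∫⁻ ρ in Icc (-R) R, ‖φ ρ‖ₑ) * ∫⁻ x, ENNReal.ofReal (Real.exp (R * u x) * w x) ∂μ := by
      rw [ENNReal.tsum_mul_left, tsum_inv_factorial_mul_lintegral_pow_mul (by fun_prop) hw
        (fun x ↦ mul_nonneg hR (hu_nonneg x)) hw_nonneg]
    _ < ⊤ := ENNReal.mul_lt_top hφ.hasFiniteIntegral h_int.lintegral_lt_top

section Polynomial

variable {ι 𝕜 : Type*} [Fintype ι] [NormedCommRing 𝕜] [NormOneClass 𝕜]

lemma norm_prod_pow_le_one_add_norm_pow (x : ι → 𝕜) (k : ι → ℕ) :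
    ‖∏ i, x i ^ k i‖ ≤ (1 + ‖x‖) ^ ∑ i, k i := calc
  ‖∏ i, x i ^ k i‖ ≤ ∏ i, ‖x i ^ k i‖ := Finset.norm_prod_le _ _
  _ ≤ ∏ i, (1 + ‖x‖) ^ k i := by
    gcongr with i
    refine (norm_pow_le _ _).trans ?_
    gcongr
    exact (norm_le_pi_norm x i).trans (by simp)
  _ = (1 + ‖x‖) ^ ∑ i, k i := Finset.prod_pow_eq_pow_sum ..

lemma norm_mvPolynomial_eval_le (q : MvPolynomial ι 𝕜) (x : ι → 𝕜) :
    ‖MvPolynomial.eval x q‖ ≤ (∑ k ∈ q.support, ‖q.coeff k‖) * (1 + ‖x‖) ^ q.totalDegree := by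
  rw [MvPolynomial.eval_eq', Finset.sum_mul]
  refine norm_sum_le_of_le _ fun k hk ↦ (norm_mul_le _ _).trans ?_
  have h_degree : ∑ i, k i ≤ q.totalDegree := by
    rw [← Finsupp.sum_fintype k (fun _ e ↦ e) fun _ ↦ rfl]
    exact MvPolynomial.le_totalDegree hk
  gcongr
  calc
    ‖∏ i, x i ^ k i‖ ≤ (1 + ‖x‖) ^ ∑ i, k i := norm_prod_pow_le_one_add_norm_pow x k
    _ ≤ (1 + ‖x‖) ^ q.totalDegree := pow_le_pow_right₀ (by simp) h_degree

lemma exists_norm_mvPolynomial_eval_rpow_inv_le {q : MvPolynomial ι 𝕜} {d : ℕ} (hd : d ≠ 0)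
    (hq : q.totalDegree ≤ d) :
    ∃ C, ∀ x : ι → 𝕜, ‖MvPolynomial.eval x q‖ ^ (d⁻¹ : ℝ) ≤ C * (1 + ‖x‖) := by
  set S : ℝ := ∑ k ∈ q.support, ‖q.coeff k‖
  have hS : 0 ≤ S := by positivity
  refine ⟨S ^ (d⁻¹ : ℝ), fun x ↦ ?_⟩
  calc
    ‖MvPolynomial.eval x q‖ ^ (d⁻¹ : ℝ) ≤ (S * (1 + ‖x‖) ^ d) ^ (d⁻¹ : ℝ) := by
      gcongr
      exact (norm_mvPolynomial_eval_le q x).trans (by gcongr; simp)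
    _ = S ^ (d⁻¹ : ℝ) * (1 + ‖x‖) := by
      rw [Real.mul_rpow hS (by positivity), Real.pow_rpow_inv_natCast (by positivity) hd]

end Polynomial

section Gaussian

variable {E : Type*} [NormedAddCommGroup E] [NormedSpace ℝ E] [FiniteDimensional ℝ E]

lemma exists_pos_mul_norm_pow_le_of_homogeneous {f : E → ℝ} {k : ℕ} (hk : k ≠ 0)
    (hf_cont : Continuous f) (hf_smul : ∀ (t : ℝ) x, f (t • x) = t ^ k * f x)
    (hf_pos : ∀ x, x ≠ 0 → 0 < f x) : ∃ c, 0 < c ∧ ∀ x, c * ‖x‖ ^ k ≤ f x := by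
  have h_zero : f 0 = 0 := by simpa [hk] using hf_smul 0 0
  obtain _ | _ := subsingleton_or_nontrivial E
  · exact ⟨1, one_pos, fun x ↦ by simp [Subsingleton.elim x 0, h_zero, hk]⟩
  obtain ⟨y, hy, h_min⟩ := (isCompact_sphere (0 : E) 1).exists_isMinOn
    (NormedSpace.sphere_nonempty.2 zero_le_one) hf_cont.continuousOn
  refine ⟨f y, hf_pos y (ne_zero_of_mem_unit_sphere ⟨y, hy⟩), fun x ↦ ?_⟩
  obtain rfl | hx := eq_or_ne x 0
  · simp [h_zero, hk]
  calc
    f y * ‖x‖ ^ k ≤ f (‖x‖⁻¹ • x) * ‖x‖ ^ k := by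
      gcongr
      exact h_min (by simp [norm_smul, hx])
    _ = f x := by
      rw [mul_comm, ← hf_smul, smul_inv_smul₀ (norm_ne_zero_iff.2 hx)]

lemma exists_pos_mul_norm_sq_le_dotProduct_mulVec {ι : Type*} [Fintype ι] {K : Matrix ι ι ℝ}
    (hK : K.PosDef) : ∃ c, 0 < c ∧ ∀ x : ι → ℝ, c * ‖x‖ ^ 2 ≤ x ⬝ᵥ K *ᵥ x :=
  exists_pos_mul_norm_pow_le_of_homogeneous two_ne_zero (by fun_prop)
    (fun t x ↦ by simp only [mulVec_smul, dotProduct_smul, smul_dotProduct, smul_eq_mul]; ring)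
    fun x hx ↦ by simpa only [star_trivial] using hK.dotProduct_mulVec_pos hx

variable [MeasurableSpace E] [BorelSpace E] (μ : Measure E) [μ.IsAddHaarMeasure]

lemma integrable_exp_neg_mul_norm_rpow {b p : ℝ} (hb : 0 < b) (hp : 0 < p) :
    Integrable (fun x : E ↦ Real.exp (-b * ‖x‖ ^ p)) μ := by
  obtain _ | _ := subsingleton_or_nontrivial E
  · exact .of_finite
  refine (integrable_fun_norm_addHaar μ (f := fun y ↦ Real.exp (-b * y ^ p))).2 ?_
  have h_exponent : (-1 : ℝ) < (Module.finrank ℝ E - 1 : ℕ) :=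
    neg_one_lt_zero.trans_le (Nat.cast_nonneg _)
  simpa only [Real.rpow_natCast, smul_eq_mul] using
    integrableOn_rpow_mul_exp_neg_mul_rpow h_exponent hp hb

lemma integrable_exp_mul_one_add_norm_sub_mul_norm_sq (A : ℝ) {c : ℝ} (hc : 0 < c) :
    Integrable (fun x : E ↦ Real.exp (A * (1 + ‖x‖) - c * ‖x‖ ^ 2)) μ := by
  have h_gauss := (integrable_exp_neg_mul_norm_rpow μ (half_pos hc) two_pos).const_mul
    (Real.exp (A + A ^ 2 / (2 * c)))
  refine h_gauss.mono' (by fun_prop) (.of_forall fun x ↦ ?_)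
  rw [Real.norm_of_nonneg (Real.exp_pos _).le, ← Real.exp_add, Real.exp_le_exp, Real.rpow_two]
  have h_square : 0 ≤ (A - c * ‖x‖) ^ 2 / (2 * c) := by positivity
  have h_expand : (A - c * ‖x‖) ^ 2 / (2 * c) =
      A ^ 2 / (2 * c) + c / 2 * ‖x‖ ^ 2 - A * ‖x‖ := by
    field_simp
    ring
  linarith

end Gaussian

lemma integrable_exp_neg_pow_two_mul {m : ℕ} (hm : 0 < m) :
    Integrable fun r : ℝ ↦ Real.exp (-(r ^ (2 * m))) := by
  have h := integrable_exp_neg_mul_norm_rpow (volume : Measure ℝ) one_pos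
    (p := (2 * m : ℕ)) (by positivity)
  simpa only [neg_one_mul, Real.rpow_natCast, Real.norm_eq_abs, (even_two_mul m).pow_abs] using h

lemma continuous_phiFT {m : ℕ} (hm : 0 < m) : Continuous (phiFT m) := by
  refine continuous_const.mul (continuous_of_dominated
    (bound := fun r ↦ Real.exp (-(r ^ (2 * m)))) (fun ρ ↦ by fun_prop)
    (fun ρ ↦ .of_forall fun r ↦ ?_) (integrable_exp_neg_pow_two_mul hm)
    (.of_forall fun r ↦ by fun_prop))
  rw [norm_mul, Complex.norm_exp, Complex.norm_real, Real.norm_of_nonneg (Real.exp_pos _).le]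
  simp

theorem stmt7_general {ι E : Type*} [Fintype ι] [NormedAddCommGroup E] {φ : ℝ → E} {R : ℝ}
    (hR : 0 ≤ R) (hφ : IntegrableOn φ (Icc (-R) R)) {q : MvPolynomial ι ℝ} {d : ℕ} (hd : d ≠ 0)
    (hq : q.totalDegree ≤ d) {K : Matrix ι ι ℝ} (hK : K.PosDef) :
    ∑' n : ℕ, (n.factorial : ℝ≥0∞)⁻¹ * ∫⁻ ρ in Icc (-R) R, ∫⁻ x : ι → ℝ,
      ENNReal.ofReal (‖φ ρ‖ * |ρ| ^ n * |MvPolynomial.eval x q| ^ ((n : ℝ) / d) *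
        Real.exp (-(x ⬝ᵥ K *ᵥ x))) < ⊤ := by
  obtain ⟨C, h_root⟩ := exists_norm_mvPolynomial_eval_rpow_inv_le hd hq
  obtain ⟨c, hc, h_quad⟩ := exists_pos_mul_norm_sq_le_dotProduct_mulVec hK
  have h_cont : Continuous fun x : ι → ℝ ↦ |MvPolynomial.eval x q| ^ (d⁻¹ : ℝ) :=
    q.continuous_eval.abs.rpow_const fun _ ↦ .inr (by positivity)
  have h_pow (n : ℕ) (x : ι → ℝ) : |MvPolynomial.eval x q| ^ ((n : ℝ) / d) =
      (|MvPolynomial.eval x q| ^ (d⁻¹ : ℝ)) ^ n := by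
    rw [← Real.rpow_mul_natCast (abs_nonneg _), inv_mul_eq_div]
  simp_rw [h_pow]
  refine tsum_inv_factorial_mul_lintegral_Icc_lintegral_lt_top hR hφ h_cont.measurable.aemeasurable
    (by fun_prop) (fun x ↦ by positivity) (fun x ↦ by positivity) ?_
  refine (integrable_exp_mul_one_add_norm_sub_mul_norm_sq volume (R * C) hc).mono'
    (by fun_prop) (.of_forall fun x ↦ ?_)
  rw [← Real.exp_add, Real.norm_of_nonneg (Real.exp_pos _).le, Real.exp_le_exp, mul_assoc,
    ← sub_eq_add_neg]
  gcongr
  exacts [h_root x, h_quad x]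

theorem stmt7 (N m : ℕ) (hN : 0 < N) (hm : 0 < m)
    (p : MvPolynomial (Fin N) ℝ) (hdeg : p.totalDegree = 2 * m)
    (M : ℝ) (hM : 0 ≤ M) (hPbound : ∀ x : Fin N → ℝ, -M ≤ MvPolynomial.eval x p)
    (K : Matrix (Fin N) (Fin N) ℝ) (hK : K.PosDef) (R : ℝ) (hR : 0 < R) :
    (∑' n : ℕ, ((n.factorial : ENNReal))⁻¹ *
        ∫⁻ ρ in Set.Icc (-R) R, ∫⁻ x : Fin N → ℝ,
          ENNReal.ofReal (‖phiFT m ρ‖ * |ρ| ^ n *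
            (MvPolynomial.eval x p + M) ^ ((n : ℝ) / (2 * m)) *
            Real.exp (-(x ⬝ᵥ K *ᵥ x)))) < ⊤ := by
  have h_degree : (p + MvPolynomial.C M).totalDegree ≤ 2 * m :=
    (MvPolynomial.totalDegree_add ..).trans (by simp [hdeg])
  have h_nonneg (x : Fin N → ℝ) : 0 ≤ MvPolynomial.eval x p + M :=
    neg_le_iff_add_nonneg.1 (hPbound x)
  simpa [abs_of_nonneg (h_nonneg _)] using stmt7_general hR.le
    (continuous_phiFT hm).continuousOn.integrableOn_Icc (by positivity) h_degree hK
end
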